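/- arXiv:2601.07228 — 2 statements merged into one kernel-verified Lean document; each statement's English description precedes it below -/
import Mathlib

section
/- Let T_k denote the k-th Chebyshev polynomial of the first kind, and let [T_k]_j denote the coefficient of x^j in T_k(x). Then |[T_k]_0| ≤ 1 for every k ≥ 0, and for every k ≥ 1, max_{1 ≤ j ≤ k} |[T_k]_j| ≤ (1+√2)^k ≤ 3^k. -/
open Polynomial

lemma cheb_zero_aux (k : ℕ) : |(Polynomial.Chebyshev.T ℝ (k : ℤ)).coeff 0| ≤ 1 := by
  induction k using Nat.twoStepInduction with
  | zero => simp
  | one => simp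
  | more n ih1 _ =>
    have e : Polynomial.Chebyshev.T ℝ ((n + 2 : ℕ) : ℤ)
        = X * (2 * Polynomial.Chebyshev.T ℝ ((n : ℤ) + 1)) - Polynomial.Chebyshev.T ℝ (n : ℤ) := by
      push_cast
      rw [Polynomial.Chebyshev.T_add_two]
      ring
    rw [e, coeff_sub, coeff_X_mul_zero, zero_sub, abs_neg]
    exact ih1

lemma cheb_coeff_aux (k : ℕ) : ∀ j : ℕ,
    |(Polynomial.Chebyshev.T ℝ (k : ℤ)).coeff j| ≤ (1 + Real.sqrt 2) ^ k := by
  have h2 : Real.sqrt 2 ^ 2 = 2 := Real.sq_sqrt (by norm_num)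
  have h0 : 0 ≤ Real.sqrt 2 := Real.sqrt_nonneg 2
  induction k using Nat.twoStepInduction with
  | zero => intro j; simp [coeff_one]; split_ifs <;> simp
  | one => intro j; simp [coeff_X]; split_ifs <;> simp <;> linarith
  | more n ih1 ih2 =>
    intro j
    rcases j with _ | j
    · exact (cheb_zero_aux (n + 2)).trans (one_le_pow₀ (by linarith))
    have e : Polynomial.Chebyshev.T ℝ ((n + 2 : ℕ) : ℤ)
        = X * (C 2 * Polynomial.Chebyshev.T ℝ ((n + 1 : ℕ) : ℤ))
          - Polynomial.Chebyshev.T ℝ (n : ℤ) := by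
      push_cast
      rw [Polynomial.Chebyshev.T_add_two, show (C 2 : ℝ[X]) = 2 from rfl]
      ring
    rw [e, coeff_sub, coeff_X_mul, coeff_C_mul]
    have a := abs_le.1 (ih1 (j + 1))
    have b := abs_le.1 (ih2 j)
    have c : (1 + Real.sqrt 2) ^ (n + 2)
        = 2 * (1 + Real.sqrt 2) ^ (n + 1) + (1 + Real.sqrt 2) ^ n := by
      linear_combination (1 + Real.sqrt 2) ^ n * h2
    rw [c, abs_le]
    constructor <;> linarith [a.1, a.2, b.1, b.2]

/-- Coefficient bounds for Chebyshev polynomials of the first kind: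
the constant coefficient of `T_k` is at most 1 in absolute value, and for `k ≥ 1`
every other coefficient of `T_k` is at most `(1+√2)^k ≤ 3^k` in absolute value. -/
theorem chebyshev_coeff_bound :
    (∀ k : ℕ, |(Polynomial.Chebyshev.T ℝ (k : ℤ)).coeff 0| ≤ 1) ∧
    (∀ k : ℕ, 1 ≤ k →
      (∀ j : ℕ, 1 ≤ j → j ≤ k →
        |(Polynomial.Chebyshev.T ℝ (k : ℤ)).coeff j| ≤ (1 + Real.sqrt 2) ^ k) ∧
      (1 + Real.sqrt 2) ^ k ≤ (3 : ℝ) ^ k) := by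
  refine ⟨cheb_zero_aux, fun k _ => ⟨fun j _ _ => cheb_coeff_aux k j, ?_⟩⟩
  have h2 : Real.sqrt 2 ≤ 2 := Real.sqrt_le_iff.2 (by norm_num)
  exact pow_le_pow_left₀ (by positivity) (by linarith) k
end

section
/- Let B ≥ 3 and let f : [−B, B] → ℝ be a 1-Lipschitz function with f(0) = 0. Then for every m that is a positive multiple of 4, there exists a polynomial P(x) = ∑_{j=0}^m c_j x^j of degree at most m such that sup_{x ∈ [−B,B]} |f(x) − P(x)| ≤ 18B/m and |c_j| ≤ 6B · 3^{m−j} for all 0 ≤ j ≤ m. -/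
noncomputable def FF (b : ℕ → ℝ) (M : ℕ) (t : ℝ) : ℝ :=
  (∑ k ∈ Finset.range M, b k * Real.cos (k * t)) ^ 2 +
  (∑ k ∈ Finset.range M, b k * Real.sin (k * t)) ^ 2

lemma FF_nonneg (b : ℕ → ℝ) (M : ℕ) (t : ℝ) : 0 ≤ FF b M t := by
  unfold FF; positivity

lemma FF_neg (b : ℕ → ℝ) (M : ℕ) (t : ℝ) : FF b M (-t) = FF b M t := by
  unfold FF; simp

lemma FF_expand (b : ℕ → ℝ) (M : ℕ) (t : ℝ) :
    FF b M t = ∑ k ∈ Finset.range M, ∑ l ∈ Finset.range M,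
      b k * b l * Real.cos ((((k : ℤ) - (l : ℤ) : ℤ) : ℝ) * t) := by
  unfold FF
  rw [sq, sq, Finset.sum_mul_sum, Finset.sum_mul_sum, ← Finset.sum_add_distrib]
  refine Finset.sum_congr rfl fun k _ => ?_
  rw [← Finset.sum_add_distrib]
  refine Finset.sum_congr rfl fun l _ => ?_
  push_cast
  rw [sub_mul, Real.cos_sub]
  ring

lemma cos_sum_zero (N : ℕ) (p : ℤ) (hp : p ≠ 0) (hpN : |p| < N) (s : ℝ) :
    ∑ j ∈ Finset.range N, Real.cos (p * (s + 2 * Real.pi * j / N)) = 0 := by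
  have hN : (N : ℝ) ≠ 0 := by
    have : (0 : ℤ) < N := lt_of_le_of_lt (abs_nonneg _) hpN
    have h2 : N ≠ 0 := by omega
    exact_mod_cast h2
  have hNC : (N : ℂ) ≠ 0 := by exact_mod_cast hN
  set ζ : ℂ := Complex.exp (2 * Real.pi * Complex.I * p / N) with hζ
  have h1 : ζ ^ N = 1 := by
    rw [hζ, ← Complex.exp_nat_mul, Complex.exp_eq_one_iff]
    exact ⟨p, by field_simp⟩
  have h2 : ζ ≠ 1 := by
    rw [hζ, Ne, Complex.exp_eq_one_iff]
    rintro ⟨n, hn⟩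
    have hpi : (Real.pi : ℂ) ≠ 0 := by exact_mod_cast Real.pi_ne_zero
    have h3 : (p : ℂ) = n * N := by
      have hI := Complex.I_ne_zero
      field_simp at hn
      linear_combination hn
    have h4 : p = n * N := by exact_mod_cast h3
    have hn0 : n ≠ 0 := by rintro rfl; simp at h4; exact hp h4
    have : (1 : ℤ) ≤ |n| := Int.one_le_abs hn0
    rw [h4, abs_mul, Nat.abs_cast] at hpN
    nlinarith [Int.natCast_nonneg N]
  have h3 : ∑ j ∈ Finset.range N, ζ ^ j = 0 := by
    rw [geom_sum_eq h2, h1]; simp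
  have h4 : ∀ j ∈ Finset.range N, Real.cos (p * (s + 2 * Real.pi * j / N))
      = (Complex.exp (p * s * Complex.I) * ζ ^ j).re := by
    intro j _
    rw [hζ, ← Complex.exp_nat_mul, ← Complex.exp_add, ← Complex.exp_ofReal_mul_I_re]
    congr 2
    push_cast
    field_simp
  rw [Finset.sum_congr rfl h4, ← Complex.re_sum, ← Finset.mul_sum, h3]
  simp

lemma FF_parseval (b : ℕ → ℝ) (M N : ℕ) (hMN : M ≤ N) (s : ℝ) :
    ∑ j ∈ Finset.range N, FF b M (s + 2 * Real.pi * j / N)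
      = N * ∑ k ∈ Finset.range M, b k ^ 2 := by
  simp_rw [FF_expand]
  rw [Finset.sum_comm, Finset.mul_sum]
  refine Finset.sum_congr rfl fun k hk => ?_
  rw [Finset.sum_comm, Finset.sum_eq_single k]
  · rw [sub_self]
    simp only [Int.cast_zero, zero_mul, Real.cos_zero, Finset.sum_const, Finset.card_range, nsmul_eq_mul]
    ring
  · intro l hl hlk
    rw [← Finset.mul_sum, cos_sum_zero, mul_zero]
    · omega
    · rw [abs_lt]; simp at hk hl; omega
  · intro h; exact absurd hk h

def dd (a : ℕ → ℝ) : ℕ → ℝ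
  | 0 => a 0
  | (k + 1) => a (k + 1) - a k

lemma dd_sum (a φ : ℕ → ℝ) (M : ℕ) :
    ∑ k ∈ Finset.range (M + 1), dd a k * φ k
      = ∑ k ∈ Finset.range M, a k * (φ k - φ (k + 1)) + a M * φ M := by
  induction M with
  | zero => simp [dd]
  | succ n ih => rw [Finset.sum_range_succ, ih, Finset.sum_range_succ]; simp only [dd]; ring

lemma FF_dd (a : ℕ → ℝ) (M : ℕ) (hM : a M = 0) (t : ℝ) :
    FF (dd a) (M + 1) t = (2 * Real.sin (t / 2)) ^ 2 * FF a M t := by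
  unfold FF
  rw [dd_sum a (fun k => Real.cos (k * t)), dd_sum a (fun k => Real.sin (k * t)), hM]
  have e1 : ∑ k ∈ Finset.range M, a k * (Real.cos (k * t) - Real.cos ((k + 1 : ℕ) * t))
      = (1 - Real.cos t) * ∑ k ∈ Finset.range M, a k * Real.cos (k * t)
        + Real.sin t * ∑ k ∈ Finset.range M, a k * Real.sin (k * t) := by
    rw [Finset.mul_sum, Finset.mul_sum, ← Finset.sum_add_distrib]
    refine Finset.sum_congr rfl fun k _ => ?_
    push_cast
    rw [add_mul, one_mul, Real.cos_add]; ring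
  have e2 : ∑ k ∈ Finset.range M, a k * (Real.sin (k * t) - Real.sin ((k + 1 : ℕ) * t))
      = (1 - Real.cos t) * ∑ k ∈ Finset.range M, a k * Real.sin (k * t)
        - Real.sin t * ∑ k ∈ Finset.range M, a k * Real.cos (k * t) := by
    rw [Finset.mul_sum, Finset.mul_sum, ← Finset.sum_sub_distrib]
    refine Finset.sum_congr rfl fun k _ => ?_
    push_cast
    rw [add_mul, one_mul, Real.sin_add]; ring
  rw [e1, e2]
  have h1 : (2 * Real.sin (t / 2)) ^ 2 = (1 - Real.cos t) ^ 2 + Real.sin t ^ 2 := by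
    have h2 : Real.cos t = 1 - 2 * Real.sin (t / 2) ^ 2 := by
      have := Real.cos_two_mul (t / 2)
      have h3 := Real.sin_sq_add_cos_sq (t / 2)
      rw [show 2 * (t / 2) = t by ring] at this
      linarith
    have h4 := Real.sin_sq_add_cos_sq t
    linear_combination 2 * h2 - h4
  rw [h1]; ring

/-- weighted bound -/
lemma FF_weighted (a : ℕ → ℝ) (M N : ℕ) (hM : a M = 0) (hMN : M + 1 ≤ N) (δ : ℝ) (hδ : 0 < δ)
    (h : ∑ k ∈ Finset.range (M + 1), dd a k ^ 2 ≤ δ ^ 2 * ∑ k ∈ Finset.range M, a k ^ 2) (s : ℝ) :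
    ∑ j ∈ Finset.range N, FF a M (s + 2 * Real.pi * j / N)
        * |2 * Real.sin ((s + 2 * Real.pi * j / N) / 2)|
      ≤ δ * (N * ∑ k ∈ Finset.range M, a k ^ 2) := by
  have p1 := FF_parseval a M N (by omega) s
  have p2 := FF_parseval (dd a) (M + 1) N hMN s
  have key : ∀ j ∈ Finset.range N, FF a M (s + 2 * Real.pi * j / N)
        * |2 * Real.sin ((s + 2 * Real.pi * j / N) / 2)| ≤
      δ / 2 * FF a M (s + 2 * Real.pi * j / N)
        + 1 / (2 * δ) * FF (dd a) (M + 1) (s + 2 * Real.pi * j / N) := by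
    intro j _
    rw [FF_dd a M hM]
    set u := 2 * Real.sin ((s + 2 * Real.pi * j / N) / 2)
    set F := FF a M (s + 2 * Real.pi * j / N)
    have hF : 0 ≤ F := FF_nonneg _ _ _
    have : |u| ≤ δ / 2 + 1 / (2 * δ) * u ^ 2 := by
      rw [← sq_abs u]
      have : δ / 2 + 1 / (2 * δ) * |u| ^ 2 - |u| = (δ - |u|) ^ 2 / (2 * δ) := by
        field_simp; ring
      have h2 : 0 ≤ (δ - |u|) ^ 2 / (2 * δ) := by positivity
      linarith
    nlinarith [mul_le_mul_of_nonneg_left this hF]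
  refine (Finset.sum_le_sum key).trans ?_
  rw [Finset.sum_add_distrib, ← Finset.mul_sum, ← Finset.mul_sum, p1, p2]
  have h5 : 1 / (2 * δ) * (N * ∑ k ∈ Finset.range (M + 1), dd a k ^ 2) ≤
      1 / (2 * δ) * (N * (δ ^ 2 * ∑ k ∈ Finset.range M, a k ^ 2)) := by gcongr
  refine (add_le_add_right h5 _).trans (le_of_eq ?_)
  field_simp; ring

def tent (m : ℕ) (k : ℕ) : ℝ := ((min (k + 1) (m + 1 - k) : ℕ) : ℝ)

lemma tent_end (m : ℕ) : tent m (m + 1) = 0 := by simp [tent]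

lemma tent_dd (m : ℕ) : ∑ k ∈ Finset.range (m + 1 + 1), dd (tent m) k ^ 2 ≤ m + 2 := by
  have : ∀ k ∈ Finset.range (m + 1 + 1), dd (tent m) k ^ 2 ≤ 1 := by
    intro k hk
    rw [sq_le_one_iff_abs_le_one]
    cases k with
    | zero => simp [dd, tent]
    | succ k =>
      simp only [dd, tent]
      rw [abs_le]
      have h1 : min (k + 1) (m + 1 - k) ≤ min (k + 1 + 1) (m + 1 - (k + 1)) + 1 := by omega
      have h2 : min (k + 1 + 1) (m + 1 - (k + 1)) ≤ min (k + 1) (m + 1 - k) + 1 := by omega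
      have h1' : ((min (k + 1) (m + 1 - k) : ℕ) : ℝ) ≤
        ((min (k + 1 + 1) (m + 1 - (k + 1)) : ℕ) : ℝ) + 1 := by exact_mod_cast h1
      have h2' : ((min (k + 1 + 1) (m + 1 - (k + 1)) : ℕ) : ℝ) ≤
        ((min (k + 1) (m + 1 - k) : ℕ) : ℝ) + 1 := by exact_mod_cast h2
      constructor <;> linarith
  refine (Finset.sum_le_sum this).trans (le_of_eq ?_)
  simp; ring

lemma tent_S (n : ℕ) : (2 * n + 1 : ℝ) * (n + 1) ^ 2 ≤
    ∑ k ∈ Finset.range (4 * n + 1), tent (4 * n) k ^ 2 := by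
  have hsub : Finset.Icc n (3 * n) ⊆ Finset.range (4 * n + 1) := by
    intro k; simp; omega
  refine le_trans ?_ (Finset.sum_le_sum_of_subset_of_nonneg hsub fun _ _ _ => sq_nonneg _)
  have : ∀ k ∈ Finset.Icc n (3 * n), ((n : ℝ) + 1) ^ 2 ≤ tent (4 * n) k ^ 2 := by
    intro k hk
    simp at hk
    have : n + 1 ≤ min (k + 1) (4 * n + 1 - k) := by omega
    have h : (n : ℝ) + 1 ≤ tent (4 * n) k := by unfold tent; exact_mod_cast this
    gcongr
  refine le_trans (le_of_eq ?_) (Finset.card_nsmul_le_sum _ _ _ this)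
  rw [Nat.card_Icc, show 3 * n + 1 - n = 2 * n + 1 by omega, nsmul_eq_mul]
  push_cast; ring

open Polynomial in
lemma T_coeff_bound (p : ℕ) : ∀ i, |(Chebyshev.T ℝ (p : ℤ)).coeff i| ≤ 3 ^ p := by
  induction p using Nat.twoStepInduction with
  | zero => intro i; simp [Polynomial.coeff_one]; split_ifs <;> simp
  | one => intro i; simp [Polynomial.coeff_X]; split_ifs <;> simp
  | more n h0 h1 =>
    intro i
    have e : Chebyshev.T ℝ ((n + 2 : ℕ) : ℤ)
        = 2 * X * Chebyshev.T ℝ ((n + 1 : ℕ) : ℤ) - Chebyshev.T ℝ (n : ℤ) := by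
      push_cast; exact Chebyshev.T_add_two ℝ n
    rw [e, coeff_sub, show (2 : ℝ[X]) * X = C 2 * X from rfl, mul_assoc, coeff_C_mul]
    have h2 : |(X * Chebyshev.T ℝ ((n + 1 : ℕ) : ℤ)).coeff i| ≤ 3 ^ (n + 1) := by
      cases i with
      | zero => simp
      | succ i => rw [coeff_X_mul]; exact h1 i
    have h3 := h0 i
    rw [abs_le] at *
    have : (0 : ℝ) < 3 ^ n := by positivity
    rw [pow_succ] at h2
    rw [pow_add]
    constructor <;> linarith [h2.1, h2.2, h3.1, h3.2]

open Polynomial in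
lemma T_coeff_bound' (p : ℤ) (i : ℕ) : |(Chebyshev.T ℝ p).coeff i| ≤ 3 ^ p.natAbs := by
  rw [← Chebyshev.T_natAbs]; exact T_coeff_bound _ _

lemma three_sum (m : ℕ) : ∑ l ∈ Finset.range (m + 1), (3 : ℝ) ^ l ≤ 3 / 2 * 3 ^ m := by
  induction m with
  | zero => norm_num
  | succ n ih => rw [Finset.sum_range_succ, pow_succ]; nlinarith [pow_succ (3:ℝ) n]

lemma three_abs_sum (m k : ℕ) (hk : k ≤ m) :
    ∑ l ∈ Finset.range (m + 1), (3 : ℝ) ^ ((k : ℤ) - (l : ℤ)).natAbs ≤ 3 * 3 ^ m := by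
  have h1 : ∀ l ∈ Finset.range (m + 1), (3 : ℝ) ^ ((k : ℤ) - (l : ℤ)).natAbs
      ≤ 3 ^ l + 3 ^ (m + 1 - 1 - l) := by
    intro l hl
    simp at hl
    rcases le_total k l with h0 | h0
    · have h : ((k : ℤ) - (l : ℤ)).natAbs ≤ l := by omega
      have := pow_le_pow_right₀ (by norm_num : (1 : ℝ) ≤ 3) h
      have h2 : (0 : ℝ) < 3 ^ (m + 1 - 1 - l) := by positivity
      linarith
    · have h' : ((k : ℤ) - (l : ℤ)).natAbs ≤ m + 1 - 1 - l := by omega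
      have := pow_le_pow_right₀ (by norm_num : (1 : ℝ) ≤ 3) h'
      have h2 : (0 : ℝ) < 3 ^ l := by positivity
      linarith
  refine (Finset.sum_le_sum h1).trans ?_
  rw [Finset.sum_add_distrib, Finset.sum_range_reflect (fun l => (3 : ℝ) ^ l)]
  linarith [three_sum m]

/-- Schur-type bound -/
lemma schur (a : ℕ → ℝ) (m : ℕ) :
    ∑ k ∈ Finset.range (m + 1), ∑ l ∈ Finset.range (m + 1),
      a k * a l * (3 : ℝ) ^ ((k : ℤ) - (l : ℤ)).natAbs
    ≤ 3 * 3 ^ m * ∑ k ∈ Finset.range (m + 1), a k ^ 2 := by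
  have h1 : ∑ k ∈ Finset.range (m + 1), ∑ l ∈ Finset.range (m + 1),
      a k ^ 2 * (3 : ℝ) ^ ((k : ℤ) - (l : ℤ)).natAbs
    ≤ 3 * 3 ^ m * ∑ k ∈ Finset.range (m + 1), a k ^ 2 := by
    rw [Finset.mul_sum]
    refine Finset.sum_le_sum fun k hk => ?_
    rw [← Finset.mul_sum, mul_comm]
    have := three_abs_sum m k (by simp at hk; omega)
    gcongr
  have h2 : ∑ k ∈ Finset.range (m + 1), ∑ l ∈ Finset.range (m + 1),
      a l ^ 2 * (3 : ℝ) ^ ((k : ℤ) - (l : ℤ)).natAbs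
    ≤ 3 * 3 ^ m * ∑ k ∈ Finset.range (m + 1), a k ^ 2 := by
    rw [Finset.sum_comm]
    refine le_trans (le_of_eq ?_) h1
    refine Finset.sum_congr rfl fun k _ => Finset.sum_congr rfl fun l _ => ?_
    rw [show ((k : ℤ) - (l : ℤ)).natAbs = ((l : ℤ) - (k : ℤ)).natAbs by omega]
  have h3 : ∑ k ∈ Finset.range (m + 1), ∑ l ∈ Finset.range (m + 1),
      a k * a l * (3 : ℝ) ^ ((k : ℤ) - (l : ℤ)).natAbs ≤
      ∑ k ∈ Finset.range (m + 1), ∑ l ∈ Finset.range (m + 1),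
      (1 / 2 * (a k ^ 2 * (3 : ℝ) ^ ((k : ℤ) - (l : ℤ)).natAbs)
       + 1 / 2 * (a l ^ 2 * (3 : ℝ) ^ ((k : ℤ) - (l : ℤ)).natAbs)) := by
    refine Finset.sum_le_sum fun k _ => Finset.sum_le_sum fun l _ => ?_
    have : (0 : ℝ) < 3 ^ ((k : ℤ) - (l : ℤ)).natAbs := by positivity
    nlinarith [mul_nonneg this.le (sq_nonneg (a k - a l))]
  refine h3.trans ?_
  simp_rw [Finset.sum_add_distrib, ← Finset.mul_sum]
  simp_rw [← Finset.mul_sum] at h1 h2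
  linarith

lemma cos_diff (θ φ : ℝ) : |Real.cos θ - Real.cos φ| ≤ |2 * Real.sin ((θ + φ) / 2)| ∧
    |Real.cos θ - Real.cos φ| ≤ |2 * Real.sin ((-θ + φ) / 2)| := by
  have e : Real.cos θ - Real.cos φ = 2 * Real.sin ((θ + φ) / 2) * Real.sin ((-θ + φ) / 2) := by
    rw [Real.cos_sub_cos, show (-θ + φ) / 2 = -((θ - φ) / 2) by ring, Real.sin_neg]; ring
  constructor
  · rw [e, abs_mul]
    exact mul_le_of_le_one_right (abs_nonneg _) (Real.abs_sin_le_one _)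
  · rw [e, show 2 * Real.sin ((θ + φ) / 2) * Real.sin ((-θ + φ) / 2)
      = (2 * Real.sin ((-θ + φ) / 2)) * Real.sin ((θ + φ) / 2) by ring, abs_mul]
    exact mul_le_of_le_one_right (abs_nonneg _) (Real.abs_sin_le_one _)

/-- main error estimate -/
lemma err_bound (g : ℝ → ℝ) (B : ℝ) (hB : 0 ≤ B)
    (hg : ∀ θ φ, |g θ - g φ| ≤ B * |Real.cos θ - Real.cos φ|)
    (a : ℕ → ℝ) (M N : ℕ) (hM : a M = 0) (hMN : M + 1 ≤ N) (δ : ℝ) (hδ : 0 < δ)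
    (h : ∑ k ∈ Finset.range (M + 1), dd a k ^ 2 ≤ δ ^ 2 * ∑ k ∈ Finset.range M, a k ^ 2)
    (S : ℝ) (hSdef : S = ∑ k ∈ Finset.range M, a k ^ 2) (hS : 0 < S) (θ : ℝ) :
    |g θ - ∑ k ∈ Finset.range M, ∑ l ∈ Finset.range M,
      a k * a l * ((∑ j ∈ Finset.range N, g (2 * Real.pi * j / N) *
        Real.cos ((((k : ℤ) - (l : ℤ) : ℤ) : ℝ) * (2 * Real.pi * j / N))) / (N * S))
        * Real.cos ((((k : ℤ) - (l : ℤ) : ℤ) : ℝ) * θ)| ≤ B * δ := by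
  have hN : (0 : ℝ) < N := by
    have : 0 < N := by omega
    exact_mod_cast this
  have hNS : 0 < N * S := by positivity
  have w1 := FF_weighted a M N hM hMN δ hδ h θ
  have w2 := FF_weighted a M N hM hMN δ hδ h (-θ)
  have p1 := FF_parseval a M N (by omega) θ
  have p2 := FF_parseval a M N (by omega) (-θ)
  rw [← hSdef] at w1 w2 p1 p2
  have e1 : ∑ k ∈ Finset.range M, ∑ l ∈ Finset.range M,
      a k * a l * ((∑ j ∈ Finset.range N, g (2 * Real.pi * j / N) *
        Real.cos ((((k : ℤ) - (l : ℤ) : ℤ) : ℝ) * (2 * Real.pi * j / N))) / (N * S))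
        * Real.cos ((((k : ℤ) - (l : ℤ) : ℤ) : ℝ) * θ) =
      (∑ j ∈ Finset.range N, g (2 * Real.pi * j / N) *
        (FF a M (θ + 2 * Real.pi * j / N) + FF a M (-θ + 2 * Real.pi * j / N))) / (2 * (N * S)) := by
    have e2 : ∀ j ∈ Finset.range N, g (2 * Real.pi * j / N) *
        (FF a M (θ + 2 * Real.pi * j / N) + FF a M (-θ + 2 * Real.pi * j / N)) =
        ∑ k ∈ Finset.range M, ∑ l ∈ Finset.range M, 2 * (a k * a l * (g (2 * Real.pi * j / N) *
        Real.cos ((((k : ℤ) - (l : ℤ) : ℤ) : ℝ) * (2 * Real.pi * j / N))) *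
        Real.cos ((((k : ℤ) - (l : ℤ) : ℤ) : ℝ) * θ)) := by
      intro j _
      rw [FF_expand, FF_expand, ← Finset.sum_add_distrib, Finset.mul_sum]
      refine Finset.sum_congr rfl fun k _ => ?_
      rw [← Finset.sum_add_distrib, Finset.mul_sum]
      refine Finset.sum_congr rfl fun l _ => ?_
      rw [mul_add _ θ, mul_add _ (-θ), Real.cos_add, Real.cos_add, mul_neg, Real.cos_neg,
        Real.sin_neg]
      ring
    symm
    rw [Finset.sum_congr rfl e2, Finset.sum_comm, Finset.sum_div]
    refine Finset.sum_congr rfl fun k _ => ?_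
    rw [Finset.sum_comm, Finset.sum_div]
    refine Finset.sum_congr rfl fun l _ => ?_
    rw [← Finset.mul_sum, ← Finset.sum_mul, ← Finset.mul_sum]
    generalize (∑ j ∈ Finset.range N, g (2 * Real.pi * j / N) *
        Real.cos ((((k : ℤ) - (l : ℤ) : ℤ) : ℝ) * (2 * Real.pi * j / N))) = Z
    field_simp
  rw [e1]
  have e3 : g θ - (∑ j ∈ Finset.range N, g (2 * Real.pi * j / N) *
        (FF a M (θ + 2 * Real.pi * j / N) + FF a M (-θ + 2 * Real.pi * j / N))) / (2 * (N * S))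
      = (∑ j ∈ Finset.range N, (g θ - g (2 * Real.pi * j / N)) *
        (FF a M (θ + 2 * Real.pi * j / N) + FF a M (-θ + 2 * Real.pi * j / N))) / (2 * (N * S)) := by
    simp_rw [sub_mul]
    rw [Finset.sum_sub_distrib, ← Finset.mul_sum, Finset.sum_add_distrib, p1, p2]
    field_simp
    ring
  rw [e3, abs_div, abs_of_pos (by positivity : 0 < 2 * (N * S)), div_le_iff₀ (by positivity)]
  refine (Finset.abs_sum_le_sum_abs _ _).trans ?_
  have key : ∀ j ∈ Finset.range N, |(g θ - g (2 * Real.pi * j / N)) *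
        (FF a M (θ + 2 * Real.pi * j / N) + FF a M (-θ + 2 * Real.pi * j / N))| ≤
      B * (FF a M (θ + 2 * Real.pi * j / N) * |2 * Real.sin ((θ + 2 * Real.pi * j / N) / 2)|)
      + B * (FF a M (-θ + 2 * Real.pi * j / N)
        * |2 * Real.sin ((-θ + 2 * Real.pi * j / N) / 2)|) := by
    intro j _
    have n1 := FF_nonneg a M (θ + 2 * Real.pi * j / N)
    have n2 := FF_nonneg a M (-θ + 2 * Real.pi * j / N)
    rw [abs_mul, abs_of_nonneg (add_nonneg n1 n2)]
    obtain ⟨c1, c2⟩ := cos_diff θ (2 * Real.pi * j / N)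
    have g0 := hg θ (2 * Real.pi * j / N)
    have g1 := g0.trans (mul_le_mul_of_nonneg_left c1 hB)
    have g2 := g0.trans (mul_le_mul_of_nonneg_left c2 hB)
    nlinarith [mul_le_mul_of_nonneg_right g1 n1, mul_le_mul_of_nonneg_right g2 n2]
  refine (Finset.sum_le_sum key).trans ?_
  rw [Finset.sum_add_distrib, ← Finset.mul_sum, ← Finset.mul_sum]
  nlinarith [mul_le_mul_of_nonneg_left w1 hB, mul_le_mul_of_nonneg_left w2 hB]


/-- Chebyshev–Jackson approximation: for `B ≥ 3` and `f : [−B,B] → ℝ` 1-Lipschitz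
with `f(0) = 0`, for every positive multiple `m` of 4 there is a polynomial
`P(x) = ∑_{j=0}^m c_j x^j` with `sup_{[−B,B]} |f − P| ≤ 18B/m` and
`|c_j| ≤ 6B · 3^{m−j}`. -/
theorem chebyshev_jackson_approx
    (B : ℝ) (hB : 3 ≤ B) (f : ℝ → ℝ)
    (hf : LipschitzOnWith 1 f (Set.Icc (-B) B)) (hf0 : f 0 = 0)
    (m : ℕ) (hm4 : 4 ∣ m) (hm : 0 < m) :
    ∃ c : ℕ → ℝ,
      (∀ x ∈ Set.Icc (-B) B,
        |f x - ∑ j ∈ Finset.range (m + 1), c j * x ^ j| ≤ 18 * B / m) ∧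
      (∀ j ≤ m, |c j| ≤ 6 * B * 3 ^ (m - j)) := by
  obtain ⟨n, rfl⟩ := hm4
  have hn : 0 < n := by omega
  have hnR : (0 : ℝ) < n := by exact_mod_cast hn
  have hB0 : 0 < B := by linarith
  set m := 4 * n with hmdef
  have hmR : (m : ℝ) = 4 * n := by rw [hmdef]; push_cast; ring
  have hmpos : (0 : ℝ) < m := by rw [hmR]; positivity
  set a := tent m with ha
  obtain ⟨S, hSdef⟩ : ∃ S, S = ∑ k ∈ Finset.range (m + 1), a k ^ 2 := ⟨_, rfl⟩
  have hSlow : (2 * n + 1 : ℝ) * (n + 1) ^ 2 ≤ S := by rw [hSdef]; exact tent_S n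
  have hS : 0 < S := lt_of_lt_of_le (by positivity) hSlow
  have ha0 : ∀ k, 0 ≤ a k := fun k => by rw [ha]; unfold tent; positivity
  set N := m + 2 with hN
  have hNpos : (0 : ℝ) < N := by rw [hN]; positivity
  set g : ℝ → ℝ := fun θ => f (B * Real.cos θ) with hgdef
  have hmem : ∀ θ, B * Real.cos θ ∈ Set.Icc (-B) B := fun θ =>
    ⟨by nlinarith [Real.neg_one_le_cos θ], by nlinarith [Real.cos_le_one θ]⟩
  have hfL : ∀ x ∈ Set.Icc (-B) B, ∀ y ∈ Set.Icc (-B) B, |f x - f y| ≤ |x - y| := by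
    intro x hx y hy
    have := hf.dist_le_mul x hx y hy
    simpa [Real.dist_eq] using this
  have hg : ∀ θ φ, |g θ - g φ| ≤ B * |Real.cos θ - Real.cos φ| := by
    intro θ φ
    refine (hfL _ (hmem θ) _ (hmem φ)).trans (le_of_eq ?_)
    rw [← mul_sub, abs_mul, abs_of_pos hB0]
  have hgB : ∀ θ, |g θ| ≤ B := by
    intro θ
    have h1 := hfL _ (hmem θ) 0 ⟨by linarith, by linarith⟩
    rw [hf0, sub_zero, sub_zero] at h1
    exact h1.trans (abs_le.2 (hmem θ))
  have hδ : (0 : ℝ) < 18 / m := by positivity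
  have hdd : ∑ k ∈ Finset.range (m + 1 + 1), dd a k ^ 2 ≤
      (18 / m : ℝ) ^ 2 * ∑ k ∈ Finset.range (m + 1), a k ^ 2 := by
    refine (tent_dd m).trans ?_
    rw [← hSdef, div_pow, div_mul_eq_mul_div, le_div_iff₀ (by positivity), hmR]
    nlinarith [mul_pos hnR hnR, mul_pos (mul_pos hnR hnR) hnR]
  have herr := err_bound g B hB0.le hg a (m + 1) N (tent_end m) (by omega) (18 / m) hδ hdd
    S hSdef hS
  set G : ℤ → ℝ := fun p => (∑ j ∈ Finset.range N, g (2 * Real.pi * j / N) *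
        Real.cos ((p : ℝ) * (2 * Real.pi * j / N))) / (N * S) with hG
  have hGB : ∀ p, |G p| ≤ B / S := by
    intro p
    simp only [hG]
    rw [abs_div, abs_of_pos (by positivity : 0 < N * S), div_le_div_iff₀ (by positivity) hS]
    have : |∑ j ∈ Finset.range N, g (2 * Real.pi * j / N) *
        Real.cos ((p : ℝ) * (2 * Real.pi * j / N))| ≤ N * B := by
      refine (Finset.abs_sum_le_sum_abs _ _).trans ?_
      refine (Finset.sum_le_card_nsmul _ _ B ?_).trans (le_of_eq (by simp))
      intro j _
      rw [abs_mul]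
      exact (mul_le_of_le_one_right (abs_nonneg _) (Real.abs_cos_le_one _)).trans (hgB _)
    nlinarith
  let Q : Polynomial ℝ := ∑ k ∈ Finset.range (m + 1), ∑ l ∈ Finset.range (m + 1),
    Polynomial.C (a k * a l * G ((k : ℤ) - l)) * Polynomial.Chebyshev.T ℝ ((k : ℤ) - l)
  have hQdeg : Q.natDegree < m + 1 := by
    refine Nat.lt_succ_of_le ?_
    refine Polynomial.natDegree_sum_le_of_forall_le _ _ fun k hk => ?_
    refine Polynomial.natDegree_sum_le_of_forall_le _ _ fun l hl => ?_
    refine (Polynomial.natDegree_C_mul_le _ _).trans ?_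
    simp at hk hl
    rw [Polynomial.Chebyshev.natDegree_T]
    omega
  have hQeval : ∀ θ, Q.eval (Real.cos θ) = ∑ k ∈ Finset.range (m + 1),
      ∑ l ∈ Finset.range (m + 1), a k * a l * G ((k : ℤ) - l)
        * Real.cos ((((k : ℤ) - (l : ℤ) : ℤ) : ℝ) * θ) := by
    intro θ
    simp only [Q, Polynomial.eval_finsetSum, Polynomial.eval_mul, Polynomial.eval_C]
    refine Finset.sum_congr rfl fun k _ => Finset.sum_congr rfl fun l _ => ?_
    rw [Polynomial.Chebyshev.T_real_cos]
  have hQcoeff : ∀ i, |Q.coeff i| ≤ 3 * B * 3 ^ m := by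
    intro i
    simp only [Q, Polynomial.finsetSum_coeff, Polynomial.coeff_C_mul]
    have h1 : |∑ k ∈ Finset.range (m + 1), ∑ l ∈ Finset.range (m + 1),
        a k * a l * G ((k : ℤ) - l) * (Polynomial.Chebyshev.T ℝ ((k : ℤ) - l)).coeff i| ≤
        ∑ k ∈ Finset.range (m + 1), ∑ l ∈ Finset.range (m + 1),
          (a k * a l * (3 : ℝ) ^ ((k : ℤ) - (l : ℤ)).natAbs) * (B / S) := by
      refine (Finset.abs_sum_le_sum_abs _ _).trans (Finset.sum_le_sum fun k _ => ?_)
      refine (Finset.abs_sum_le_sum_abs _ _).trans (Finset.sum_le_sum fun l _ => ?_)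
      rw [abs_mul, abs_mul, abs_of_nonneg (mul_nonneg (ha0 k) (ha0 l)), mul_assoc, mul_assoc (a k * a l)]
      refine mul_le_mul_of_nonneg_left ?_ (mul_nonneg (ha0 k) (ha0 l))
      rw [mul_comm]
      exact mul_le_mul (T_coeff_bound' _ _) (hGB _) (abs_nonneg _) (by positivity)
    refine h1.trans ?_
    simp_rw [← Finset.sum_mul]
    have h2 := schur a m
    rw [← hSdef] at h2
    calc _ ≤ 3 * 3 ^ m * S * (B / S) := by gcongr
      _ = 3 * B * 3 ^ m := by field_simp
  refine ⟨fun j => Q.coeff j / B ^ j, ?_, ?_⟩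
  · intro x hx
    have hx1 : -1 ≤ x / B := by rw [le_div_iff₀ hB0]; linarith [hx.1]
    have hx2 : x / B ≤ 1 := by rw [div_le_iff₀ hB0]; linarith [hx.2]
    have hc := Real.cos_arccos hx1 hx2
    have h1 := herr (Real.arccos (x / B))
    have h2 := hQeval (Real.arccos (x / B))
    have h3 : g (Real.arccos (x / B)) = f x := by
      simp only [hgdef]; rw [hc]; congr 1; field_simp
    have h4 : ∑ j ∈ Finset.range (m + 1), Q.coeff j / B ^ j * x ^ j = Q.eval (x / B) := by
      rw [Polynomial.eval_eq_sum_range' hQdeg]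
      refine Finset.sum_congr rfl fun j _ => ?_
      rw [div_pow]; ring
    rw [h4, ← hc, h2, ← h3]
    refine h1.trans (le_of_eq ?_)
    ring
  · intro j hj
    have hBj : (3 : ℝ) ^ j ≤ B ^ j := by gcongr
    have h3j : (0 : ℝ) < 3 ^ j := by positivity
    simp only
    rw [abs_div, abs_of_pos (by positivity : 0 < B ^ j), div_le_iff₀ (by positivity)]
    refine (hQcoeff j).trans ?_
    have e : (3 : ℝ) ^ m = 3 ^ (m - j) * 3 ^ j := by rw [← pow_add]; congr 1; omega
    rw [e]
    calc 3 * B * (3 ^ (m - j) * 3 ^ j) ≤ 6 * B * (3 ^ (m - j) * B ^ j) := by gcongr; norm_num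
      _ = _ := by ring
end
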